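/- Let χ : K^× → ℤ/2ℤ be a group homomorphism and n ≥ 1 an integer such that χ vanishes on U_{n+1} and χ(π) = 0. Let t ∈ 𝔬^× be a unit with χ(t) = 0 and χ(1 + tπⁿ) = 1. Then x := t⁻¹π⁻ⁿ satisfies χ(x) = 0, χ(x − e₁) = 1, and χ(x − e₂) = 1; in particular x ∉ {0, e₁, e₂} and χ(x(x−e₁)(x−e₂)) = 0. -/

import Mathlib

/-- An additively written, normalized (i.e. surjective onto `ℤ`) discrete
valuation on a field `K`.  All axioms are imposed at nonzero arguments only,
so the value of `v` at `0` is irrelevant.  For a finite extension `K` of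
`ℚ_[p]`, the normalized valuation `v : K^× → ℤ` of the paper is such a
structure. -/
structure DValuation (K : Type*) [Field K] where
  /-- the valuation map -/
  v : K → ℤ
  v_mul : ∀ ⦃x y : K⦄, x ≠ 0 → y ≠ 0 → v (x * y) = v x + v y
  min_le_v_add : ∀ ⦃x y : K⦄, x ≠ 0 → y ≠ 0 → x + y ≠ 0 → min (v x) (v y) ≤ v (x + y)
  v_surj : ∀ m : ℤ, ∃ x : K, x ≠ 0 ∧ v x = m

namespace DValuation

variable {K : Type*} [Field K] (w : DValuation K)

/-- `u ∈ U_m` : `u` is (a unit) congruent to `1` modulo `𝔭^m`; for `m ≥ 1`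
this forces `v u = 0`, i.e. `u ∈ 𝔬^×`. -/
def IsUnit₁ (m : ℤ) (u : K) : Prop :=
  u = 1 ∨ m ≤ w.v (u - 1)

end DValuation

namespace DValuation

variable {K : Type*} [Field K] (w : DValuation K)

/-- `z ∈ 𝔭^m`. -/
def Ge (m : ℤ) (z : K) : Prop := z = 0 ∨ m ≤ w.v z

theorem v_one : w.v 1 = 0 := by
  have h := w.v_mul (one_ne_zero (α := K)) (one_ne_zero (α := K))
  rw [mul_one] at h
  omega

theorem v_neg_one : w.v (-1) = 0 := by
  have h0 : (-1 : K) ≠ 0 := neg_ne_zero.mpr one_ne_zero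
  have h := w.v_mul h0 h0
  rw [neg_mul_neg, one_mul, v_one] at h
  omega

theorem Ge.add {m : ℤ} {a b : K} (ha : w.Ge m a) (hb : w.Ge m b) : w.Ge m (a + b) := by
  by_cases h : a + b = 0
  · exact Or.inl h
  · rcases ha with rfl | ha
    · simpa using hb
    · rcases hb with rfl | hb
      · rw [add_zero]; exact Or.inr ha
      · by_cases a0 : a = 0
        · subst a0; right; simpa using hb
        by_cases b0 : b = 0
        · subst b0; right; simpa using ha
        exact Or.inr (le_trans (le_min ha hb) (w.min_le_v_add a0 b0 h))

theorem Ge.mul {m k : ℤ} {a b : K} (ha : w.Ge m a) (hb : w.Ge k b) : w.Ge (m + k) (a * b) := by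
  by_cases a0 : a = 0
  · left; simp [a0]
  by_cases b0 : b = 0
  · left; simp [b0]
  right
  rw [w.v_mul a0 b0]
  have := ha.resolve_left a0
  have := hb.resolve_left b0
  omega

theorem v_pow {a : K} (ha : a ≠ 0) (n : ℕ) : w.v (a ^ n) = n * w.v a := by
  induction n with
  | zero => simp [v_one]
  | succ k ih =>
    rw [pow_succ, w.v_mul (pow_ne_zero k ha) ha, ih]; push_cast; ring

theorem v_two_pos [Algebra ℚ_[2] K] [FiniteDimensional ℚ_[2] K]
    (hext : ∀ x : ℚ_[2], x ≠ 0 →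
      w.v (algebraMap ℚ_[2] K x) = w.v (algebraMap ℚ_[2] K 2) * x.valuation)
    (π : K) (hπ0 : π ≠ 0) (hπ : w.v π = 1) : 1 ≤ w.v (2 : K) := by
  have h2 : (2 : K) ≠ 0 := by
    have : algebraMap ℚ_[2] K 2 ≠ 0 := by
      rw [Ne, map_eq_zero]; norm_num
    rwa [map_ofNat] at this
  have hg : w.Ge 0 (2 : K) := by
    rw [← one_add_one_eq_two]
    exact Ge.add w (Or.inr w.v_one.ge) (Or.inr w.v_one.ge)
  have hge := hg.resolve_left h2
  by_contra hlt
  have hz : w.v (2 : K) = 0 := by omega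
  have htriv : ∀ a : ℚ_[2], a ≠ 0 → w.v (algebraMap ℚ_[2] K a) = 0 := by
    intro a ha
    rw [hext a ha, map_ofNat, hz, zero_mul]
  have hq : ∀ q : Polynomial ℚ_[2], w.Ge 0 (Polynomial.aeval π q) := by
    intro q
    induction q using Polynomial.induction_on' with
    | add p q hp hq => rw [map_add]; exact Ge.add w hp hq
    | monomial n a =>
      rw [Polynomial.aeval_monomial]
      have h1 : w.Ge 0 (algebraMap ℚ_[2] K a) := by
        by_cases ha : a = 0
        · left; simp [ha]
        · exact Or.inr (htriv a ha).ge
      have h3 : w.Ge 0 (π ^ n) := by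
        right; rw [v_pow w hπ0, hπ]; positivity
      simpa using Ge.mul w h1 h3
  have hint : IsIntegral ℚ_[2] π := Algebra.IsIntegral.isIntegral π
  have hc := minpoly.coeff_zero_ne_zero hint hπ0
  have he := minpoly.aeval ℚ_[2] π
  rw [← Polynomial.divX_mul_X_add (minpoly ℚ_[2] π)] at he
  simp only [map_add, map_mul, Polynomial.aeval_X, Polynomial.aeval_C] at he
  set c := (minpoly ℚ_[2] π).coeff 0
  have h4 : algebraMap ℚ_[2] K (-c) = Polynomial.aeval π (minpoly ℚ_[2] π).divX * π := by
    rw [map_neg]; linear_combination -he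
  have hc' : algebraMap ℚ_[2] K (-c) ≠ 0 := by
    rw [Ne, map_eq_zero]; simpa using hc
  have h5 := Ge.mul w (hq (minpoly ℚ_[2] π).divX) (Or.inr hπ.ge : w.Ge 1 π)
  rw [← h4] at h5
  have h6 := h5.resolve_left hc'
  rw [htriv (-c) (neg_ne_zero.mpr hc)] at h6
  omega

/-- `1 + y` has valuation zero if `y ∈ 𝔭`. -/
theorem one_add_unit {y : K} (hy : w.Ge 1 y) : 1 + y ≠ 0 ∧ w.v (1 + y) = 0 := by
  have h1 : ¬ w.Ge 1 (1 : K) := by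
    rintro (h | h)
    · exact one_ne_zero h
    · rw [v_one] at h; omega
  have hneg : w.Ge 1 (-y) := by
    have := Ge.mul w (Or.inr w.v_neg_one.ge : w.Ge 0 (-1 : K)) hy
    simpa using this
  have hne : ¬ w.Ge 1 (1 + y) := by
    intro h
    apply h1
    have := Ge.add w h hneg
    simpa using this
  have h0 : 1 + y ≠ 0 := fun h => hne (Or.inl h)
  have hy0 : w.Ge 0 y := hy.imp id (fun h => by omega)
  have hge := (Ge.add w (Or.inr w.v_one.ge : w.Ge 0 (1 : K)) hy0).resolve_left h0
  refine ⟨h0, ?_⟩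
  have : ¬ 1 ≤ w.v (1 + y) := fun h => hne (Or.inr h)
  omega

/-- Key step. -/
theorem key (h2 : 1 ≤ w.v (2 : K)) (χ : K → ZMod 2)
    (hχ : ∀ ⦃x y : K⦄, x ≠ 0 → y ≠ 0 → χ (x * y) = χ x + χ y)
    (n : ℕ) (hn : 1 ≤ n)
    (hvan : ∀ u : K, w.IsUnit₁ ((n : ℤ) + 1) u → χ u = 0)
    (e y x : K) (he : w.IsUnit₁ 1 e) (hy : w.v y = n) (hx0 : x ≠ 0) (hxy : x * y = 1)
    (hχx : χ x = 0) (hχy : χ (1 + y) = 1) : χ (x - e) = 1 ∧ x ≠ e := by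
  have hyn : w.Ge n y := Or.inr hy.ge
  obtain ⟨h0, hv⟩ := w.one_add_unit (y := y) (Or.inr (by omega))
  have hinv : w.v (1 + y)⁻¹ = 0 := by
    have := w.v_mul h0 (inv_ne_zero h0)
    rw [mul_inv_cancel₀ h0, v_one, hv] at this
    omega
  have he' : w.Ge 1 (e - 1) := he.imp (fun h => by rw [h, sub_self]) id
  have h1e : w.Ge 1 (2 + (e - 1)) := Ge.add w (Or.inr h2) he'
  have hz : w.Ge ((n : ℤ) + 1) (-1 * (y * (2 + (e - 1))) * (1 + y)⁻¹) := by
    have := Ge.mul w (Ge.mul w (Or.inr w.v_neg_one.ge : w.Ge 0 (-1 : K)) (Ge.mul w hyn h1e))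
      (Or.inr hinv.ge : w.Ge 0 (1 + y)⁻¹)
    simpa using this
  set z := -1 * (y * (2 + (e - 1))) * (1 + y)⁻¹ with hzdef
  have hu : χ (1 + z) = 0 := by
    apply hvan
    refine hz.imp (fun h => by rw [h, add_zero]) (fun h => ?_)
    rwa [add_sub_cancel_left]
  have hu0 : 1 + z ≠ 0 := (w.one_add_unit (y := z) (hz.imp id (fun h => by omega))).1
  have hfac : x - e = x * ((1 + y) * (1 + z)) := by
    have hzy : z * (1 + y) = -1 * (y * (2 + (e - 1))) := by
      rw [hzdef, inv_mul_cancel_right₀ h0]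
    linear_combination (-x) * hzy + e * hxy
  have hp := mul_ne_zero h0 hu0
  constructor
  · rw [hfac, hχ hx0 hp, hχ h0 hu0, hχx, hχy, hu]; rfl
  · intro h
    rw [h, sub_self] at hfac
    exact mul_ne_zero (h ▸ hx0) hp hfac.symm

end DValuation

/-- The element `x = t⁻¹π⁻ⁿ` always produces the class `(0,1)`:
`χ : K^× → ℤ/2ℤ` a homomorphism vanishing on `U_{n+1}` (`n ≥ 1`) with
`χ(π) = 0`, and `t` a unit with `χ(t) = 0` and `χ(1 + tπⁿ) = 1`.  Then
`x = t⁻¹π⁻ⁿ` satisfies `χ(x) = 0`, `χ(x−e₁) = 1` and `χ(x−e₂) = 1`; in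
particular `x ∉ {0, e₁, e₂}` and `χ(x(x−e₁)(x−e₂)) = 0`. -/
theorem chatelet_class_zero_one
    (K : Type*) [Field K] [Algebra ℚ_[2] K] [FiniteDimensional ℚ_[2] K]
    (w : DValuation K)
    (hext : ∀ x : ℚ_[2], x ≠ 0 →
      w.v (algebraMap ℚ_[2] K x) = w.v (algebraMap ℚ_[2] K 2) * x.valuation)
    (π : K) (hπ0 : π ≠ 0) (hπ : w.v π = 1)
    (χ : K → ZMod 2)
    (hχ : ∀ ⦃x y : K⦄, x ≠ 0 → y ≠ 0 → χ (x * y) = χ x + χ y)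
    (n : ℕ) (hn : 1 ≤ n)
    (hvan : ∀ u : K, w.IsUnit₁ ((n : ℤ) + 1) u → χ u = 0)
    (hχπ : χ π = 0)
    (e₁ e₂ : K) (he₁ : w.IsUnit₁ 1 e₁) (he₂ : w.IsUnit₁ 1 e₂) (hee : e₁ ≠ e₂)
    (t : K) (ht0 : t ≠ 0) (htu : w.v t = 0)
    (hχt : χ t = 0) (hχtπ : χ (1 + t * π ^ n) = 1)
    (x : K) (hx : x = t⁻¹ * (π ^ n)⁻¹) :
    χ x = 0 ∧ χ (x - e₁) = 1 ∧ χ (x - e₂) = 1 ∧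
      x ≠ 0 ∧ x ≠ e₁ ∧ x ≠ e₂ ∧ χ (x * (x - e₁) * (x - e₂)) = 0 := by
  have h2 := w.v_two_pos hext π hπ0 hπ
  have hπn : π ^ n ≠ 0 := pow_ne_zero n hπ0
  have hy0 : t * π ^ n ≠ 0 := mul_ne_zero ht0 hπn
  have hx0 : x ≠ 0 := by
    rw [hx]; exact mul_ne_zero (inv_ne_zero ht0) (inv_ne_zero hπn)
  have hxy : x * (t * π ^ n) = 1 := by
    rw [hx]; field_simp
  have hχ1 : χ 1 = 0 := hvan 1 (Or.inl rfl)
  have hχp : ∀ k : ℕ, χ (π ^ k) = 0 := by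
    intro k
    induction k with
    | zero => simpa using hχ1
    | succ k ih => rw [pow_succ, hχ (pow_ne_zero k hπ0) hπ0, ih, hχπ, add_zero]
  have hχx : χ x = 0 := by
    have h := hχ hx0 hy0
    rw [hxy, hχ1, hχ ht0 hπn, hχt, hχp, add_zero, add_zero] at h
    exact h.symm
  have hvy : w.v (t * π ^ n) = n := by
    rw [w.v_mul ht0 hπn, w.v_pow hπ0, htu, hπ]; ring
  obtain ⟨a1, b1⟩ := w.key h2 χ hχ n hn hvan e₁ _ x he₁ hvy hx0 hxy hχx hχtπ
  obtain ⟨a2, b2⟩ := w.key h2 χ hχ n hn hvan e₂ _ x he₂ hvy hx0 hxy hχx hχtπ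
  refine ⟨hχx, a1, a2, hx0, b1, b2, ?_⟩
  rw [hχ (mul_ne_zero hx0 (sub_ne_zero.mpr b1)) (sub_ne_zero.mpr b2),
    hχ hx0 (sub_ne_zero.mpr b1), hχx, a1, a2]
  rfl
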